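/- For every prime p, the convolution identity Φ_p(1,0,0) * Φ_p(1,1,0) = Φ_p(2,1,0) + (p² + p + 1)·Φ_p(1,1,1) holds in the space of compactly supported K_p-biinvariant functions on GL_3(ℚ_p). -/

import Mathlib

open MeasureTheory

noncomputable section

variable (p : ℕ) [Fact p.Prime]

/-- The diagonal element `diag(p^a, p^b, p^c)` of `GL₃(ℚ_p)`. -/
def padicDiag (a b c : ℤ) : GL (Fin 3) ℚ_[p] := by
  have hp : (p : ℚ_[p]) ≠ 0 := by
    exact_mod_cast (Nat.cast_ne_zero (R := ℚ_[p])).mpr (Fact.out : p.Prime).ne_zero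
  refine ⟨Matrix.diagonal ![(p : ℚ_[p]) ^ a, (p : ℚ_[p]) ^ b, (p : ℚ_[p]) ^ c],
    Matrix.diagonal ![(p : ℚ_[p]) ^ (-a), (p : ℚ_[p]) ^ (-b), (p : ℚ_[p]) ^ (-c)], ?_, ?_⟩ <;>
  · rw [Matrix.diagonal_mul_diagonal]
    ext i j
    fin_cases i <;> fin_cases j <;>
      simp [zpow_neg, mul_inv_cancel₀ (zpow_ne_zero _ hp), inv_mul_cancel₀ (zpow_ne_zero _ hp)]

/-- `K_p = GL₃(ℤ_p)`, viewed as the image of `GL₃(ℤ_p)` inside `GL₃(ℚ_p)`. -/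
def padicK : Set (GL (Fin 3) ℚ_[p]) :=
  Set.range fun u : (Matrix (Fin 3) (Fin 3) ℤ_[p])ˣ =>
    Units.map (RingHom.toMonoidHom (RingHom.mapMatrix (PadicInt.Coe.ringHom (p := p)))) u

/-- The double coset `K_p · diag(p^a, p^b, p^c) · K_p`. -/
def padicDoubleCoset (a b c : ℤ) : Set (GL (Fin 3) ℚ_[p]) :=
  {x | ∃ k₁ ∈ padicK p, ∃ k₂ ∈ padicK p, x = k₁ * padicDiag p a b c * k₂}

/-- `Φ_p(a,b,c)`: the characteristic function of `K_p(a,b,c)`. -/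
def padicPhi (a b c : ℤ) : GL (Fin 3) ℚ_[p] → ℝ :=
  (padicDoubleCoset p a b c).indicator fun _ => (1 : ℝ)

instance : MeasurableSpace (GL (Fin 3) ℚ_[p]) := borel _

/-- Convolution of functions on `GL₃(ℚ_p)` with respect to a measure `μ`. -/
def padicConv (μ : Measure (GL (Fin 3) ℚ_[p])) (f h : GL (Fin 3) ℚ_[p] → ℝ) :
    GL (Fin 3) ℚ_[p] → ℝ :=
  fun x => ∫ y, f y * h (y⁻¹ * x) ∂μ

/-!
Let `R` be a discrete valuation ring with uniformizer `ϖ`, residue field `k` of order `q` and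
fraction field `F`, let `K = GL n R`, and let `A` be the set of `y ∈ GL n F` such that `y Rⁿ` is a
sublattice of colength one in `Rⁿ`. The double coset of `diag(ϖ, 1, …, 1)` is `A`, and
`y⁻¹ x` lies in that of `diag(ϖ, …, ϖ, 1)` exactly when `y ∈ g A` for `g = ϖ⁻¹ x`. Hence the
convolution at `x` is the measure of `A ∩ g A`, the number of lattices that have colength one both
in `Rⁿ` and in `g Rⁿ`.

Two distinct lattices of colength one in a lattice generate it. So if there are two common ones,
then `Rⁿ = g Rⁿ`, that is `g ∈ K`, and the common ones are all the sublattices of colength one in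
`Rⁿ`. These are parametrized by the lines of `kⁿ`, so there are `1 + q + ⋯ + q ^ (n - 1)` of them.
If `g ∉ K`, there is at most one. There is one exactly when `g` lies in the double coset of
`diag(ϖ, 1, …, 1, ϖ⁻¹)`, because for `y ∈ A ∩ g A` the elements `y` and `g⁻¹ y` of `A` can be
brought to diagonal form by a common right factor from `K`.
-/

open Matrix IsLocalRing DoubleCoset
open scoped Pointwise LinearAlgebra.Projectivization

theorem exists_linearEquiv_apply_eq {k V ι : Type*} [DivisionRing k] [AddCommGroup V] [Module k V]
    [Finite ι] {v w : ι → V} (hv : LinearIndependent k v) (hw : LinearIndependent k w) :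
    ∃ e : V ≃ₗ[k] V, ∀ a, e (v a) = w a := by
  let f := hv.linearCombinationEquiv.symm ≪≫ₗ hw.linearCombinationEquiv
  have := FiniteDimensional.span_of_finite k (Set.finite_range v)
  obtain ⟨e, he⟩ := Submodule.exists_linearEquiv_restrict_eq f
  refine ⟨e, fun a => ?_⟩
  have hva : v a = hv.linearCombinationEquiv (Finsupp.single a 1) := by simp
  rw [hva, ← he]
  simp [f]

section LocalRing

variable {R n : Type*} [Fintype n] [DecidableEq n] [CommRing R] [IsLocalRing R]

theorem isUnit_mapMatrix_residue_iff {N : Matrix n n R} :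
    IsUnit ((residue R).mapMatrix N) ↔ IsUnit N := by
  rw [isUnit_iff_isUnit_det, isUnit_iff_isUnit_det, ← RingHom.map_det, isUnit_map_iff]

theorem mapMatrix_residue_surjective :
    Function.Surjective ((residue R).mapMatrix : Matrix n n R →+* _) :=
  fun M => ⟨M.map (Function.surjInv residue_surjective), by
    ext i j
    exact Function.surjInv_eq residue_surjective _⟩

theorem exists_isUnit_single_vecMul_mapMatrix_eq {ι : Type*} [Finite ι]
    {w : ι → n → ResidueField R} (hw : LinearIndependent (ResidueField R) w)
    {f : ι → n} (hf : Function.Injective f) :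
    ∃ U : Matrix n n R, IsUnit U ∧
      ∀ a, Pi.single (f a) 1 ᵥ* (residue R).mapMatrix U = w a := by
  obtain ⟨e, he⟩ := exists_linearEquiv_apply_eq
    ((Pi.linearIndependent_single_one n (ResidueField R)).comp f hf) hw
  obtain ⟨U, hU⟩ := mapMatrix_residue_surjective (LinearMap.toMatrix' e.toLinearMap)ᵀ
  refine ⟨U, ?_, fun a => ?_⟩
  · rw [← isUnit_mapMatrix_residue_iff, hU, isUnit_transpose, LinearMap.isUnit_toMatrix'_iff]
    exact (LinearMap.GeneralLinearGroup.ofLinearEquiv e).isUnit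
  · rw [hU, vecMul_transpose, LinearMap.toMatrix'_mulVec]
    exact he a

end LocalRing

section CommRing

variable {R n : Type*} [Fintype n] [DecidableEq n] [CommRing R] {N N' U : Matrix n n R}

/-- The diagonal matrix with entry `r` at position `i` and `1` elsewhere. For `r` a uniformizer of
a discrete valuation ring, it is the normal form of the matrices whose determinant is a
uniformizer. -/
def uniformizerAt (r : R) (i : n) : Matrix n n R :=
  diagonal (Pi.mulSingle i r)

theorem det_uniformizerAt (r : R) (i : n) : (uniformizerAt r i).det = r := by
  simp [uniformizerAt, det_diagonal]

theorem isUnit_of_irreducible_det_mul (h : Irreducible (N * N').det) (hN : Irreducible N.det) :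
    IsUnit N' := by
  rw [det_mul] at h
  exact (isUnit_iff_isUnit_det _).2 ((h.isUnit_or_isUnit rfl).resolve_left hN.not_isUnit)

theorem irreducible_det_isUnit_mul (hU : IsUnit U) :
    Irreducible (U * N).det ↔ Irreducible N.det := by
  rw [det_mul, irreducible_isUnit_mul ((isUnit_iff_isUnit_det _).1 hU)]

theorem irreducible_det_mul_isUnit (hU : IsUnit U) :
    Irreducible (N * U).det ↔ Irreducible N.det := by
  rw [det_mul, irreducible_mul_isUnit ((isUnit_iff_isUnit_det _).1 hU)]

theorem isUnit_mul_dvd_isUnit_mul_iff (hU : IsUnit U) : U * N ∣ U * N' ↔ N ∣ N' := by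
  simp only [dvd_def, mul_assoc, hU.mul_right_inj]

end CommRing

section DiscreteValuationRing

variable {R n : Type*} [Fintype n] [DecidableEq n] [CommRing R] [IsDomain R]
  [IsDiscreteValuationRing R] {r : R} {N N' U : Matrix n n R} {s t : n → ResidueField R} {i j : n}

theorem residue_eq_zero_iff_dvd (hr : Irreducible r) {a : R} : residue R a = 0 ↔ r ∣ a := by
  rw [residue_eq_zero_iff, hr.maximalIdeal_eq, Ideal.mem_span_singleton]

theorem mapMatrix_residue_uniformizerAt (hr : Irreducible r) (i : n) :
    (residue R).mapMatrix (uniformizerAt r i) = diagonal (Pi.mulSingle i 0) := by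
  rw [uniformizerAt, RingHom.mapMatrix_apply, diagonal_map (map_zero _)]
  congr 1
  ext j
  obtain rfl | hj := eq_or_ne j i <;> simp [residue_eq_zero_iff_dvd hr, *]

theorem uniformizerAt_dvd_iff (hr : Irreducible r) :
    uniformizerAt r i ∣ N ↔ Pi.single i 1 ᵥ* (residue R).mapMatrix N = 0 := by
  constructor
  · rintro ⟨C, rfl⟩
    rw [map_mul, ← vecMul_vecMul, mapMatrix_residue_uniformizerAt hr]
    simp
  · intro h
    have hdvd (j : n) : r ∣ N i j := by
      simpa [residue_eq_zero_iff_dvd hr] using congrFun h j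
    choose c hc using hdvd
    refine ⟨N.updateRow i c, ?_⟩
    ext a j
    obtain rfl | ha := eq_or_ne a i <;> simp [uniformizerAt, diagonal_mul, *]

theorem not_uniformizerAt_dvd_uniformizerAt (hr : Irreducible r) (hij : i ≠ j) :
    ¬ uniformizerAt r i ∣ uniformizerAt r j := by
  rw [uniformizerAt_dvd_iff hr, mapMatrix_residue_uniformizerAt hr]
  intro h
  simpa [hij] using congrFun h i

theorem uniformizerAt_dvd_mul_iff (hr : Irreducible r)
    (hs : Pi.single i 1 ᵥ* (residue R).mapMatrix U = s) :
    uniformizerAt r i ∣ U * N ↔ s ᵥ* (residue R).mapMatrix N = 0 := by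
  rw [uniformizerAt_dvd_iff hr, map_mul, ← vecMul_vecMul, hs]

theorem exists_isUnit_mul_eq_uniformizerAt_mul (hr : Irreducible r) (hU : IsUnit U)
    (hs : Pi.single i 1 ᵥ* (residue R).mapMatrix U = s) (hN : Irreducible N.det)
    (hsN : s ᵥ* (residue R).mapMatrix N = 0) :
    ∃ V : Matrix n n R, IsUnit V ∧ U * N = uniformizerAt r i * V := by
  obtain ⟨V, hV⟩ := (uniformizerAt_dvd_mul_iff hr hs).2 hsN
  refine ⟨V, isUnit_of_irreducible_det_mul (N := uniformizerAt r i) ?_ ?_, hV⟩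
  · rwa [← hV, irreducible_det_isUnit_mul hU]
  · rwa [det_uniformizerAt]

theorem exists_isUnit_single_vecMul_eq (i : n) (hs : s ≠ 0) :
    ∃ U : Matrix n n R, IsUnit U ∧ Pi.single i 1 ᵥ* (residue R).mapMatrix U = s := by
  obtain ⟨U, hU, hUs⟩ := exists_isUnit_single_vecMul_mapMatrix_eq (w := fun _ : Unit => s)
    (LinearIndependent.of_subsingleton () hs) (f := fun _ => i)
    (Function.injective_of_subsingleton _)
  exact ⟨U, hU, hUs ()⟩

theorem exists_vecMul_mapMatrix_residue_eq_zero (hN : Irreducible N.det) :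
    ∃ s ≠ 0, s ᵥ* (residue R).mapMatrix N = 0 :=
  exists_vecMul_eq_zero_iff.2 <| by
    rw [← RingHom.map_det, residue_eq_zero_iff]
    exact hN.not_isUnit

theorem exists_irreducible_det_vecMul_eq_zero (hs : s ≠ 0) :
    ∃ N : Matrix n n R, Irreducible N.det ∧ s ᵥ* (residue R).mapMatrix N = 0 := by
  obtain ⟨r, hr⟩ := IsDiscreteValuationRing.exists_irreducible R
  obtain ⟨i, -⟩ := Function.ne_iff.1 hs
  obtain ⟨_, ⟨U, rfl⟩, hUs⟩ := exists_isUnit_single_vecMul_eq i hs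
  refine ⟨U⁻¹ * uniformizerAt r i, ?_, ?_⟩
  · rwa [irreducible_det_isUnit_mul (Units.isUnit _), det_uniformizerAt]
  · rw [← uniformizerAt_dvd_mul_iff hr hUs, Units.mul_inv_cancel_left]

theorem dvd_iff_vecMul_mapMatrix_residue_eq_zero (hN : Irreducible N.det) (hs : s ≠ 0)
    (hsN : s ᵥ* (residue R).mapMatrix N = 0) :
    N ∣ N' ↔ s ᵥ* (residue R).mapMatrix N' = 0 := by
  obtain ⟨r, hr⟩ := IsDiscreteValuationRing.exists_irreducible R
  obtain ⟨i, -⟩ := Function.ne_iff.1 hs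
  obtain ⟨U, hU, hUs⟩ := exists_isUnit_single_vecMul_eq i hs
  obtain ⟨V, hV, hUN⟩ := exists_isUnit_mul_eq_uniformizerAt_mul hr hU hUs hN hsN
  rw [← isUnit_mul_dvd_isUnit_mul_iff hU, hUN, hV.mul_right_dvd, uniformizerAt_dvd_mul_iff hr hUs]

theorem exists_smul_eq_of_vecMul_eq_zero (hN : Irreducible N.det) (hs : s ≠ 0)
    (hsN : s ᵥ* (residue R).mapMatrix N = 0) (htN : t ᵥ* (residue R).mapMatrix N = 0) :
    ∃ c : ResidueField R, c • s = t := by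
  obtain ⟨r, hr⟩ := IsDiscreteValuationRing.exists_irreducible R
  obtain ⟨i, -⟩ := Function.ne_iff.1 hs
  obtain ⟨U, hU, hUs⟩ := exists_isUnit_single_vecMul_eq i hs
  obtain ⟨V, hV, hUN⟩ := exists_isUnit_mul_eq_uniformizerAt_mul hr hU hUs hN hsN
  obtain ⟨x, rfl⟩ := vecMul_surjective_iff_isUnit.2 (isUnit_mapMatrix_residue_iff.2 hU) t
  have hxD : x ᵥ* (residue R).mapMatrix (uniformizerAt r i) = 0 := by
    apply vecMul_injective_of_isUnit (isUnit_mapMatrix_residue_iff.2 hV)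
    dsimp only
    rw [vecMul_vecMul, ← map_mul, ← hUN, map_mul, ← vecMul_vecMul, htN, zero_vecMul]
  have hx : x = x i • Pi.single i 1 := by
    ext j
    have hj := congrFun hxD j
    rw [mapMatrix_residue_uniformizerAt hr] at hj
    obtain rfl | hji := eq_or_ne j i <;> simp_all [vecMul_diagonal]
  exact ⟨x i, by rw [← hUs, ← smul_vecMul, ← hx]⟩

theorem existsUnique_rep_vecMul_mapMatrix_residue_eq_zero (hN : Irreducible N.det) :
    ∃! l : ℙ (ResidueField R) (n → ResidueField R),
      l.rep ᵥ* (residue R).mapMatrix N = 0 := by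
  obtain ⟨s, hs, hsN⟩ := exists_vecMul_mapMatrix_residue_eq_zero hN
  refine ⟨.mk _ s hs, ?_, fun l hl => ?_⟩
  · obtain ⟨c, hc⟩ := Projectivization.exists_smul_eq_mk_rep (ResidueField R) s hs
    rw [← hc, Units.smul_def, smul_vecMul, hsN, smul_zero]
  · rw [← l.mk_rep, Projectivization.mk_eq_mk_iff']
    exact exists_smul_eq_of_vecMul_eq_zero hN hs hsN hl

theorem exists_mul_add_mul_eq_one (hN : Irreducible N.det) (hNN' : ¬ N ∣ N') :
    ∃ X Y : Matrix n n R, N * X + N' * Y = 1 := by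
  obtain ⟨s, hs, hsN⟩ := exists_vecMul_mapMatrix_residue_eq_zero hN
  rw [dvd_iff_vecMul_mapMatrix_residue_eq_zero hN hs hsN] at hNN'
  obtain ⟨j, hj⟩ := Function.ne_iff.1 hNN'
  -- `Y` has rank one modulo the maximal ideal and satisfies `s N' Y = s` there.
  obtain ⟨Y, hY⟩ := mapMatrix_residue_surjective
    (vecMulVec (Pi.single j ((s ᵥ* (residue R).mapMatrix N') j)⁻¹) s)
  have hdvd : N ∣ 1 - N' * Y := by
    rw [dvd_iff_vecMul_mapMatrix_residue_eq_zero hN hs hsN, map_sub, map_one, map_mul, hY,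
      vecMul_sub, vecMul_one, ← vecMul_vecMul, vecMul_vecMulVec, dotProduct_single,
      mul_inv_cancel₀ hj, one_smul, sub_self]
  obtain ⟨X, hX⟩ := hdvd
  exact ⟨X, Y, by rw [← hX, sub_add_cancel]⟩

theorem linearIndependent_of_not_dvd (hN : Irreducible N.det) (hs : s ≠ 0) (ht : t ≠ 0)
    (hsN : s ᵥ* (residue R).mapMatrix N = 0) (htN' : t ᵥ* (residue R).mapMatrix N' = 0)
    (hNN' : ¬ N ∣ N') : LinearIndependent (ResidueField R) ![s, t] := by
  rw [LinearIndependent.pair_iff' hs]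
  rintro c rfl
  rw [smul_vecMul, smul_eq_zero] at htN'
  rw [dvd_iff_vecMul_mapMatrix_residue_eq_zero hN hs hsN] at hNN'
  exact ht (by simp [htN'.resolve_right hNN'])

theorem exists_mul_eq_uniformizerAt_mul (hr : Irreducible r) (hij : i ≠ j)
    (hN : Irreducible N.det) (hN' : Irreducible N'.det) (hNN' : ¬ N ∣ N') :
    ∃ U V V' : Matrix n n R, IsUnit U ∧ IsUnit V ∧ IsUnit V' ∧
      U * N = uniformizerAt r i * V ∧ U * N' = uniformizerAt r j * V' := by
  obtain ⟨s, hs, hsN⟩ := exists_vecMul_mapMatrix_residue_eq_zero hN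
  obtain ⟨t, ht, htN'⟩ := exists_vecMul_mapMatrix_residue_eq_zero hN'
  obtain ⟨U, hU, hUw⟩ := exists_isUnit_single_vecMul_mapMatrix_eq
    (linearIndependent_of_not_dvd hN hs ht hsN htN' hNN') (f := ![i, j]) (by simpa using hij)
  obtain ⟨V, hV, hUN⟩ := exists_isUnit_mul_eq_uniformizerAt_mul hr hU (hUw 0) hN hsN
  obtain ⟨V', hV', hUN'⟩ := exists_isUnit_mul_eq_uniformizerAt_mul hr hU (hUw 1) hN' htN'
  exact ⟨U, V, V', hU, hV, hV', hUN, hUN'⟩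

theorem exists_mul_eq_mul_uniformizerAt (hr : Irreducible r) (hij : i ≠ j)
    (hN : Irreducible N.det) (hN' : Irreducible N'.det) (hNN' : ¬ ∃ C, IsUnit C ∧ C * N = N') :
    ∃ U V V' : Matrix n n R, IsUnit U ∧ IsUnit V ∧ IsUnit V' ∧
      N * U = V * uniformizerAt r i ∧ N' * U = V' * uniformizerAt r j := by
  rw [← det_transpose] at hN hN'
  have hdvd : ¬ Nᵀ ∣ N'ᵀ := by
    rintro ⟨C, hC⟩
    refine hNN' ⟨Cᵀ, ?_, transpose_injective ?_⟩
    · exact (isUnit_transpose C).2 (isUnit_of_irreducible_det_mul (hC ▸ hN') hN)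
    · rw [hC, transpose_mul, transpose_transpose]
  obtain ⟨U, V, V', hU, hV, hV', hUN, hUN'⟩ := exists_mul_eq_uniformizerAt_mul hr hij
    hN hN' hdvd
  refine ⟨Uᵀ, Vᵀ, V'ᵀ, (isUnit_transpose U).2 hU, (isUnit_transpose V).2 hV,
    (isUnit_transpose V').2 hV', ?_, ?_⟩
  · simpa [uniformizerAt] using congrArg transpose hUN
  · simpa [uniformizerAt] using congrArg transpose hUN'

end DiscreteValuationRing

section GeneralLinearGroup

variable (R n F : Type*) [Fintype n] [DecidableEq n] [CommRing R] [Field F] [Algebra R F]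

/-- The image of `GL n R` in `GL n F`: the stabilizer of the standard lattice `Rⁿ ⊆ Fⁿ`. -/
def integralGL : Subgroup (GL n F) :=
  (GeneralLinearGroup.map (algebraMap R F)).range

/-- The `y ∈ GL n F` that come from a matrix over `R` with irreducible determinant. Over a discrete
valuation ring, these are the `y` for which `y Rⁿ` is a sublattice of colength one in `Rⁿ`. -/
def colengthOne : Set (GL n F) :=
  {y | ∃ N : Matrix n n R, Irreducible N.det ∧ (algebraMap R F).mapMatrix N = y}

variable {R n F}

theorem mem_integralGL_iff_exists_isUnit {g : GL n F} :
    g ∈ integralGL R n F ↔ ∃ U : Matrix n n R, IsUnit U ∧ (algebraMap R F).mapMatrix U = g := by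
  constructor
  · rintro ⟨u, rfl⟩
    exact ⟨u, u.isUnit, rfl⟩
  · rintro ⟨_, ⟨u, rfl⟩, hu⟩
    exact ⟨u, Units.ext hu⟩

theorem mul_mul_mem_colengthOne_iff {k k' y : GL n F} (hk : k ∈ integralGL R n F)
    (hk' : k' ∈ integralGL R n F) : k * y * k' ∈ colengthOne R n F ↔ y ∈ colengthOne R n F := by
  suffices h : ∀ u v : GL n R, ∀ y ∈ colengthOne R n F,
      GeneralLinearGroup.map (algebraMap R F) u * y * GeneralLinearGroup.map (algebraMap R F) v ∈
        colengthOne R n F by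
    obtain ⟨u, rfl⟩ := hk
    obtain ⟨v, rfl⟩ := hk'
    exact ⟨fun hy => by simpa [mul_assoc] using h u⁻¹ v⁻¹ _ hy, h u v y⟩
  rintro u v y ⟨N, hN, hNy⟩
  refine ⟨u * N * v, ?_, by rw [map_mul, map_mul, hNy]; rfl⟩
  rwa [irreducible_det_mul_isUnit v.isUnit, irreducible_det_isUnit_mul u.isUnit]

theorem smul_colengthOne {k : GL n F} (hk : k ∈ integralGL R n F) :
    k • colengthOne R n F = colengthOne R n F := by
  ext y
  rw [Set.mem_smul_set_iff_inv_smul_mem, smul_eq_mul, ← mul_one (k⁻¹ * y),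
    mul_mul_mem_colengthOne_iff (inv_mem hk) (one_mem _)]

theorem smul_integralGL_subset_colengthOne {y : GL n F} (hy : y ∈ colengthOne R n F) :
    y • (integralGL R n F : Set (GL n F)) ⊆ colengthOne R n F := by
  rintro _ ⟨k, hk, rfl⟩
  simpa using (mul_mul_mem_colengthOne_iff (one_mem _) hk).2 hy

theorem isCompact_integralGL [TopologicalSpace R] [IsTopologicalRing R] [T1Space R]
    [CompactSpace R] [TopologicalSpace F] (hcont : Continuous (algebraMap R F)) :
    IsCompact (integralGL R n F : Set (GL n F)) := by
  have : CompactSpace (Matrix n n R) := Pi.compactSpace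
  exact isCompact_range hcont.generalLinearGroup_map

variable [FaithfulSMul R F]

theorem mapMatrix_algebraMap_injective :
    Function.Injective ((algebraMap R F).mapMatrix : Matrix n n R →+* Matrix n n F) :=
  map_injective (FaithfulSMul.algebraMap_injective R F)

theorem mem_integralGL_iff {g : GL n F} : g ∈ integralGL R n F ↔
    (∃ N : Matrix n n R, (algebraMap R F).mapMatrix N = g) ∧
      ∃ N : Matrix n n R, (algebraMap R F).mapMatrix N = (g⁻¹ : GL n F) := by
  constructor
  · rintro ⟨u, rfl⟩
    exact ⟨⟨u, rfl⟩, (u⁻¹ : GL n R), by rw [← map_inv]; rfl⟩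
  · rintro ⟨⟨N, hN⟩, N', hN'⟩
    refine mem_integralGL_iff_exists_isUnit.2 ⟨N, ?_, hN⟩
    refine IsUnit.of_mul_eq_one N' (mapMatrix_algebraMap_injective (F := F) ?_)
    rw [map_mul, hN, hN', map_one, Units.mul_inv]

theorem exists_coe_eq_mapMatrix {N : Matrix n n R} (hN : N.det ≠ 0) :
    ∃ y : GL n F, (algebraMap R F).mapMatrix N = y := by
  refine ⟨GeneralLinearGroup.mkOfDetNeZero ((algebraMap R F).mapMatrix N) ?_, rfl⟩
  rwa [← RingHom.map_det, map_ne_zero_iff _ (FaithfulSMul.algebraMap_injective R F)]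

theorem inv_mul_mem_integralGL_iff_dvd {y y' : GL n F} {N N' : Matrix n n R}
    (hN : Irreducible N.det) (hN' : Irreducible N'.det)
    (hNy : (algebraMap R F).mapMatrix N = y) (hNy' : (algebraMap R F).mapMatrix N' = y') :
    y⁻¹ * y' ∈ integralGL R n F ↔ N ∣ N' := by
  rw [mem_integralGL_iff_exists_isUnit]
  constructor
  · rintro ⟨U, -, hU⟩
    refine ⟨U, mapMatrix_algebraMap_injective (F := F) ?_⟩
    rw [map_mul, hU, hNy, hNy', ← Units.val_mul, mul_inv_cancel_left]
  · rintro ⟨C, rfl⟩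
    refine ⟨C, isUnit_of_irreducible_det_mul hN' hN, ?_⟩
    rw [Units.val_mul, Units.eq_inv_mul_iff_mul_eq, ← hNy, ← hNy', map_mul]

end GeneralLinearGroup

section DiagonalPow

variable {n F : Type*} [Fintype n] [DecidableEq n] [Field F]

/-- The diagonal element of `GL n F` with entries `ϖ ^ a i`. -/
def diagonalPow (ϖ : Fˣ) (a : n → ℤ) : GL n F :=
  Units.map (diagonalRingHom n F).toMonoidHom (MulEquiv.piUnits.symm fun i => ϖ ^ a i)

theorem coe_diagonalPow (ϖ : Fˣ) (a : n → ℤ) :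
    (diagonalPow ϖ a : Matrix n n F) = diagonal fun i => (ϖ : F) ^ a i := by
  simp [diagonalPow]

theorem diagonalPow_zero (ϖ : Fˣ) : diagonalPow ϖ (0 : n → ℤ) = 1 :=
  Units.ext <| by simp [coe_diagonalPow]

theorem diagonalPow_add (ϖ : Fˣ) (a b : n → ℤ) :
    diagonalPow ϖ (a + b) = diagonalPow ϖ a * diagonalPow ϖ b :=
  Units.ext <| by simp [coe_diagonalPow, zpow_add₀]

theorem diagonalPow_neg (ϖ : Fˣ) (a : n → ℤ) : diagonalPow ϖ (-a) = (diagonalPow ϖ a)⁻¹ :=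
  eq_inv_of_mul_eq_one_left <| by rw [← diagonalPow_add, neg_add_cancel, diagonalPow_zero]

theorem diagonalPow_one_commute (ϖ : Fˣ) (g : GL n F) : Commute (diagonalPow ϖ 1) g :=
  Units.ext <| by
    simpa [coe_diagonalPow] using (scalar_commute (ϖ : F) (Commute.all _) (g : Matrix n n F)).eq

theorem coe_diagonalPow_single {R : Type*} [CommRing R] [Algebra R F] {r : R} {ϖ : Fˣ}
    (hϖ : algebraMap R F r = ϖ) (i : n) :
    (algebraMap R F).mapMatrix (uniformizerAt r i) = (diagonalPow ϖ (Pi.single i 1) : GL n F) := by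
  rw [coe_diagonalPow, uniformizerAt, RingHom.mapMatrix_apply, diagonal_map (map_zero _)]
  congr 1
  ext j
  obtain rfl | hj := eq_or_ne j i <;> simp [*]

end DiagonalPow

section CartanCell

variable (R : Type*) {n F : Type*} [Fintype n] [DecidableEq n] [CommRing R] [Field F] [Algebra R F]
  {r : R} {ϖ : Fˣ} {a : n → ℤ} {g x : GL n F} {i j : n}

/-- The double coset of `diagonalPow ϖ a` with respect to `integralGL R n F`. -/
def cartanCell (ϖ : Fˣ) (a : n → ℤ) : Set (GL n F) :=
  doubleCoset (diagonalPow ϖ a) (integralGL R n F) (integralGL R n F)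

variable {R}

theorem mem_cartanCell_iff : x ∈ cartanCell R ϖ a ↔
    ∃ k ∈ integralGL R n F, ∃ k' ∈ integralGL R n F, x = k * diagonalPow ϖ a * k' :=
  mem_doubleCoset

theorem mem_cartanCell_zero_iff : x ∈ cartanCell R ϖ 0 ↔ x ∈ integralGL R n F := by
  simp only [mem_cartanCell_iff, diagonalPow_zero, mul_one]
  constructor
  · rintro ⟨k, hk, k', hk', rfl⟩
    exact mul_mem hk hk'
  · exact fun hx => ⟨x, hx, 1, one_mem _, (mul_one x).symm⟩

theorem inv_mem_cartanCell_of_mem (hx : x ∈ cartanCell R ϖ a) : x⁻¹ ∈ cartanCell R ϖ (-a) := by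
  obtain ⟨k, hk, k', hk', rfl⟩ := mem_cartanCell_iff.1 hx
  exact mem_cartanCell_iff.2 ⟨k'⁻¹, inv_mem hk', k⁻¹, inv_mem hk, by
    simp only [diagonalPow_neg, _root_.mul_inv_rev, mul_assoc]⟩

theorem inv_mem_cartanCell_iff : x⁻¹ ∈ cartanCell R ϖ a ↔ x ∈ cartanCell R ϖ (-a) :=
  ⟨fun hx => inv_inv x ▸ inv_mem_cartanCell_of_mem hx,
    fun hx => neg_neg a ▸ inv_mem_cartanCell_of_mem hx⟩

theorem mem_cartanCell_add_one_iff :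
    x ∈ cartanCell R ϖ (a + 1) ↔ (diagonalPow ϖ 1)⁻¹ * x ∈ cartanCell R ϖ a := by
  have hcentral (k k' : GL n F) :
      k * diagonalPow ϖ (a + 1) * k' = diagonalPow ϖ 1 * (k * diagonalPow ϖ a * k') := by
    rw [diagonalPow_add, ← (diagonalPow_one_commute ϖ _).eq,
      ← (diagonalPow_one_commute ϖ k).left_comm]
    simp only [mul_assoc]
  simp only [mem_cartanCell_iff, hcentral, inv_mul_eq_iff_eq_mul]

theorem diagonalPow_single_mem_colengthOne (hr : Irreducible r) (hϖ : algebraMap R F r = ϖ)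
    (i : n) : diagonalPow ϖ (Pi.single i 1) ∈ colengthOne R n F :=
  ⟨uniformizerAt r i, by rwa [det_uniformizerAt], coe_diagonalPow_single hϖ i⟩

theorem inter_nonempty_of_mem_cartanCell (hr : Irreducible r) (hϖ : algebraMap R F r = ϖ)
    (hg : g ∈ cartanCell R ϖ (Pi.single i 1 - Pi.single j 1)) :
    (colengthOne R n F ∩ g • colengthOne R n F).Nonempty := by
  obtain ⟨k, hk, k', hk', rfl⟩ := mem_cartanCell_iff.1 hg
  refine ⟨k * diagonalPow ϖ (Pi.single i 1) * 1, ?_, Set.mem_smul_set_iff_inv_smul_mem.2 ?_⟩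
  · rw [mul_mul_mem_colengthOne_iff hk (one_mem _)]
    exact diagonalPow_single_mem_colengthOne hr hϖ i
  · have hdiag : (diagonalPow ϖ (Pi.single i 1 - Pi.single j 1))⁻¹ *
        diagonalPow ϖ (Pi.single i 1) = diagonalPow ϖ (Pi.single j 1) := by
      rw [← diagonalPow_neg, ← diagonalPow_add, neg_sub, sub_add_cancel]
    have hcancel : (k * diagonalPow ϖ (Pi.single i 1 - Pi.single j 1) * k')⁻¹ •
        (k * diagonalPow ϖ (Pi.single i 1) * 1) = k'⁻¹ * diagonalPow ϖ (Pi.single j 1) * 1 := by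
      rw [smul_eq_mul, ← hdiag]
      group
    rw [hcancel, mul_mul_mem_colengthOne_iff (inv_mem hk') (one_mem _)]
    exact diagonalPow_single_mem_colengthOne hr hϖ j

end CartanCell

section ColengthOne

variable {R n F : Type*} [Fintype n] [DecidableEq n] [CommRing R] [IsDomain R]
  [IsDiscreteValuationRing R] [Field F] [Algebra R F]
  {r : R} {ϖ : Fˣ} {g y y' : GL n F} {i j : n}

theorem cartanCell_single (hr : Irreducible r) (hϖ : algebraMap R F r = ϖ) (i : n) :
    cartanCell R ϖ (Pi.single i 1) = colengthOne R n F := by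
  ext y
  rw [mem_cartanCell_iff]
  constructor
  · rintro ⟨k, hk, k', hk', rfl⟩
    rw [mul_mul_mem_colengthOne_iff hk hk']
    exact diagonalPow_single_mem_colengthOne hr hϖ i
  · rintro ⟨N, hN, hNy⟩
    obtain ⟨s, hs, hsN⟩ := exists_vecMul_mapMatrix_residue_eq_zero hN
    obtain ⟨_, ⟨u, rfl⟩, hUs⟩ := exists_isUnit_single_vecMul_eq i hs
    obtain ⟨_, ⟨v, rfl⟩, huv⟩ := exists_isUnit_mul_eq_uniformizerAt_mul hr u.isUnit hUs hN hsN
    refine ⟨_, ⟨u⁻¹, rfl⟩, _, ⟨v, rfl⟩, ?_⟩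
    rw [map_inv, mul_assoc, eq_inv_mul_iff_mul_eq]
    ext1
    rw [Units.val_mul, Units.val_mul, ← hNy, ← coe_diagonalPow_single hϖ]
    exact (map_mul _ _ _).symm.trans ((congrArg _ huv).trans (map_mul _ _ _))

theorem mem_cartanCell_one_sub_single_iff (hr : Irreducible r) (hϖ : algebraMap R F r = ϖ) (j : n)
    {x : GL n F} : y⁻¹ * x ∈ cartanCell R ϖ (1 - Pi.single j 1) ↔
      y ∈ ((diagonalPow ϖ 1)⁻¹ * x) • colengthOne R n F := by
  rw [sub_eq_neg_add, mem_cartanCell_add_one_iff, ← inv_mem_cartanCell_iff,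
    cartanCell_single hr hϖ, Set.mem_smul_set_iff_inv_smul_mem, smul_eq_mul, ← mul_assoc,
    (diagonalPow_one_commute ϖ y).inv_inv.eq]
  simp only [_root_.mul_inv_rev, inv_inv, mul_assoc]

theorem exists_eq_mul_diagonalPow_mul (hr : Irreducible r) (hϖ : algebraMap R F r = ϖ)
    (hij : i ≠ j) (hy : y ∈ colengthOne R n F) (hy' : y' ∈ colengthOne R n F)
    (hyy' : y' * y⁻¹ ∉ integralGL R n F) :
    ∃ k ∈ integralGL R n F, ∃ k' ∈ integralGL R n F, ∃ k₀ ∈ integralGL R n F,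
      y = k * diagonalPow ϖ (Pi.single i 1) * k₀ ∧
        y' = k' * diagonalPow ϖ (Pi.single j 1) * k₀ := by
  obtain ⟨N, hN, hNy⟩ := hy
  obtain ⟨N', hN', hNy'⟩ := hy'
  have hunit : ¬ ∃ C, IsUnit C ∧ C * N = N' := by
    rintro ⟨C, hC, rfl⟩
    refine hyy' (mem_integralGL_iff_exists_isUnit.2 ⟨C, hC, ?_⟩)
    rw [Units.val_mul, Units.eq_mul_inv_iff_mul_eq, ← hNy, ← hNy', map_mul]
  obtain ⟨_, _, _, ⟨u, rfl⟩, ⟨v, rfl⟩, ⟨v', rfl⟩, huv, huv'⟩ :=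
    exists_mul_eq_mul_uniformizerAt hr hij hN hN' hunit
  have hmap {z : GL n F} {M : Matrix n n R} {w : GL n R} {l : n}
      (hMz : (algebraMap R F).mapMatrix M = z) (h : M * u = w * uniformizerAt r l) :
      z = GeneralLinearGroup.map (algebraMap R F) w * diagonalPow ϖ (Pi.single l 1) *
        GeneralLinearGroup.map (algebraMap R F) u⁻¹ := by
    rw [map_inv, eq_mul_inv_iff_mul_eq]
    ext1
    rw [Units.val_mul, Units.val_mul, ← hMz, ← coe_diagonalPow_single hϖ]
    exact (map_mul _ _ _).symm.trans ((congrArg _ h).trans (map_mul _ _ _))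
  exact ⟨_, ⟨v, rfl⟩, _, ⟨v', rfl⟩, _, ⟨u⁻¹, rfl⟩, hmap hNy huv, hmap hNy' huv'⟩

theorem mem_cartanCell_of_mem_inter (hr : Irreducible r) (hϖ : algebraMap R F r = ϖ)
    (hij : i ≠ j) (hg : g ∉ integralGL R n F)
    (hy : y ∈ colengthOne R n F ∩ g • colengthOne R n F) :
    g ∈ cartanCell R ϖ (Pi.single i 1 - Pi.single j 1) := by
  obtain ⟨k, hk, k', hk', k₀, -, hy₀, hgy₀⟩ := exists_eq_mul_diagonalPow_mul hr hϖ hij hy.1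
    (Set.mem_smul_set_iff_inv_smul_mem.1 hy.2) (by simpa using hg)
  refine mem_cartanCell_iff.2 ⟨k, hk, k'⁻¹, inv_mem hk', ?_⟩
  calc g = y * (g⁻¹ • y)⁻¹ := by simp
    _ = k * diagonalPow ϖ (Pi.single i 1) * k₀ *
        (k' * diagonalPow ϖ (Pi.single j 1) * k₀)⁻¹ := by rw [← hgy₀, ← hy₀]
    _ = k * diagonalPow ϖ (Pi.single i 1 - Pi.single j 1) * k'⁻¹ := by
      rw [sub_eq_add_neg, diagonalPow_add, diagonalPow_neg]
      group

variable [FaithfulSMul R F]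

theorem diagonalPow_single_sub_single_notMem_integralGL (hr : Irreducible r)
    (hϖ : algebraMap R F r = ϖ) (hij : i ≠ j) :
    diagonalPow ϖ (Pi.single i 1 - Pi.single j 1) ∉ integralGL R n F := by
  rw [sub_eq_add_neg, add_comm, diagonalPow_add, diagonalPow_neg,
    inv_mul_mem_integralGL_iff_dvd (N := uniformizerAt r j) (N' := uniformizerAt r i)
      (by rwa [det_uniformizerAt]) (by rwa [det_uniformizerAt])
      (coe_diagonalPow_single hϖ j) (coe_diagonalPow_single hϖ i)]
  exact not_uniformizerAt_dvd_uniformizerAt hr hij.symm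

theorem exists_mapMatrix_eq_inv (hy : y ∈ colengthOne R n F) (hy' : y' ∈ colengthOne R n F)
    (hgy : g⁻¹ * y ∈ colengthOne R n F) (hgy' : g⁻¹ * y' ∈ colengthOne R n F)
    (hyy' : y⁻¹ * y' ∉ integralGL R n F) :
    ∃ N : Matrix n n R, (algebraMap R F).mapMatrix N = (g⁻¹ : GL n F) := by
  obtain ⟨N, hN, hNy⟩ := hy
  obtain ⟨N', hN', hNy'⟩ := hy'
  obtain ⟨M, -, hM⟩ := hgy
  obtain ⟨M', -, hM'⟩ := hgy'
  rw [inv_mul_mem_integralGL_iff_dvd hN hN' hNy hNy'] at hyy'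
  obtain ⟨X, Y, hXY⟩ := exists_mul_add_mul_eq_one hN hyy'
  refine ⟨M * X + M' * Y, ?_⟩
  rw [map_add, map_mul, map_mul, hM, hM', Units.val_mul, Units.val_mul, ← hNy, ← hNy', mul_assoc,
    mul_assoc, ← mul_add, ← map_mul, ← map_mul, ← map_add, hXY, map_one, mul_one]

theorem inv_mul_mem_integralGL_of_mem_inter (hg : g ∉ integralGL R n F)
    (hy : y ∈ colengthOne R n F ∩ g • colengthOne R n F)
    (hy' : y' ∈ colengthOne R n F ∩ g • colengthOne R n F) :
    y⁻¹ * y' ∈ integralGL R n F := by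
  simp only [Set.mem_inter_iff, Set.mem_smul_set_iff_inv_smul_mem, smul_eq_mul] at hy hy'
  contrapose! hg
  refine mem_integralGL_iff.2 ⟨?_, exists_mapMatrix_eq_inv hy.1 hy'.1 hy.2 hy'.2 hg⟩
  have h := exists_mapMatrix_eq_inv (g := g⁻¹) (y := g⁻¹ * y) (y' := g⁻¹ * y') hy.2 hy'.2
    (by simpa using hy.1) (by simpa using hy'.1) (by simpa [mul_assoc] using hg)
  rwa [inv_inv] at h

theorem colengthOne_inter_smul_eq_smul (hg : g ∉ integralGL R n F)
    (hy : y ∈ colengthOne R n F ∩ g • colengthOne R n F) :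
    colengthOne R n F ∩ g • colengthOne R n F = y • (integralGL R n F : Set (GL n F)) := by
  ext y'
  rw [Set.mem_smul_set_iff_inv_smul_mem, smul_eq_mul]
  refine ⟨inv_mul_mem_integralGL_of_mem_inter hg hy, fun hyy' => ?_⟩
  simp only [Set.mem_inter_iff, Set.mem_smul_set_iff_inv_smul_mem, smul_eq_mul] at hy ⊢
  obtain ⟨k, hk, rfl⟩ : ∃ k ∈ integralGL R n F, y * k = y' := ⟨_, hyy', mul_inv_cancel_left _ _⟩
  have hmul (z : GL n F) : z * k ∈ colengthOne R n F ↔ z ∈ colengthOne R n F := by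
    simpa using mul_mul_mem_colengthOne_iff (y := z) (one_mem _) hk
  rwa [← mul_assoc, hmul, hmul]

theorem notMem_integralGL_of_mem_cartanCell (hr : Irreducible r) (hϖ : algebraMap R F r = ϖ)
    (hij : i ≠ j) (hg : g ∈ cartanCell R ϖ (Pi.single i 1 - Pi.single j 1)) :
    g ∉ integralGL R n F := by
  obtain ⟨k, hk, k', hk', rfl⟩ := mem_cartanCell_iff.1 hg
  rw [Subgroup.mul_mem_cancel_right _ hk', Subgroup.mul_mem_cancel_left _ hk]
  exact diagonalPow_single_sub_single_notMem_integralGL hr hϖ hij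

theorem exists_existsUnique_mem_smul_integralGL :
    ∃ y : ℙ (ResidueField R) (n → ResidueField R) → GL n F, (∀ l, y l ∈ colengthOne R n F) ∧
      ∀ z ∈ colengthOne R n F, ∃! l, z ∈ y l • (integralGL R n F : Set (GL n F)) := by
  choose N hN hNl using fun l : ℙ (ResidueField R) (n → ResidueField R) =>
    exists_irreducible_det_vecMul_eq_zero l.rep_nonzero
  choose y hNy using fun l => exists_coe_eq_mapMatrix (F := F) (hN l).ne_zero
  refine ⟨y, fun l => ⟨N l, hN l, hNy l⟩, ?_⟩
  rintro z ⟨M, hM, hMz⟩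
  have hmem (l) : z ∈ y l • (integralGL R n F : Set (GL n F)) ↔
      l.rep ᵥ* (residue R).mapMatrix M = 0 := by
    rw [Set.mem_smul_set_iff_inv_smul_mem, smul_eq_mul, SetLike.mem_coe,
      inv_mul_mem_integralGL_iff_dvd (hN l) hM (hNy l) hMz,
      dvd_iff_vecMul_mapMatrix_residue_eq_zero (hN l) l.rep_nonzero (hNl l)]
  simpa only [hmem] using existsUnique_rep_vecMul_mapMatrix_residue_eq_zero hM

theorem exists_colengthOne_eq_iUnion_smul :
    ∃ y : ℙ (ResidueField R) (n → ResidueField R) → GL n F,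
      colengthOne R n F = ⋃ l, y l • (integralGL R n F : Set (GL n F)) ∧
        Pairwise (Function.onFun Disjoint fun l => y l • (integralGL R n F : Set (GL n F))) := by
  obtain ⟨y, hy, huniq⟩ := exists_existsUnique_mem_smul_integralGL (R := R) (n := n) (F := F)
  refine ⟨y, ?_, fun l m hlm => ?_⟩
  · refine subset_antisymm (fun z hz => Set.mem_iUnion.2 (huniq z hz).exists) ?_
    exact Set.iUnion_subset fun l => smul_integralGL_subset_colengthOne (hy l)
  · refine Set.disjoint_left.2 fun z hzl hzm => hlm ?_
    exact (huniq z (smul_integralGL_subset_colengthOne (hy l) hzl)).unique hzl hzm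

end ColengthOne

section Convolution

variable {R n F : Type*} [Fintype n] [DecidableEq n] [CommRing R] [IsDomain R]
  [IsDiscreteValuationRing R] [Field F] [Algebra R F] [FaithfulSMul R F]
  [MeasurableSpace (GL n F)] {μ : Measure (GL n F)} {r : R} {ϖ : Fˣ} {g : GL n F} {i j : n}

theorem measureReal_inter_smul_of_notMem [μ.IsMulLeftInvariant]
    (hμ : μ (integralGL R n F) = 1) (hr : Irreducible r) (hϖ : algebraMap R F r = ϖ)
    (hij : i ≠ j) (hg : g ∉ integralGL R n F) :
    μ.real (colengthOne R n F ∩ g • colengthOne R n F) =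
      (cartanCell R ϖ (Pi.single i 1 - Pi.single j 1)).indicator 1 g := by
  obtain hempty | ⟨y, hy⟩ := (colengthOne R n F ∩ g • colengthOne R n F).eq_empty_or_nonempty
  · have hmem : g ∉ cartanCell R ϖ (Pi.single i 1 - Pi.single j 1) := fun hmem =>
      (inter_nonempty_of_mem_cartanCell hr hϖ hmem).ne_empty hempty
    rw [hempty, measureReal_empty, Set.indicator_of_notMem hmem]
  · rw [colengthOne_inter_smul_eq_smul hg hy, measureReal_def, measure_smul, hμ,
      Set.indicator_of_mem (mem_cartanCell_of_mem_inter hr hϖ hij hg hy), Pi.one_apply,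
      ENNReal.toReal_one]

variable [MeasurableMul (GL n F)] [Finite (ResidueField R)]

theorem measurableSet_colengthOne (hK : MeasurableSet (integralGL R n F : Set (GL n F))) :
    MeasurableSet (colengthOne R n F) := by
  obtain ⟨y, hy, -⟩ := exists_colengthOne_eq_iUnion_smul (R := R) (n := n) (F := F)
  rw [hy]
  exact .iUnion fun l => hK.const_smul _

theorem integral_cartanCell_mul_cartanCell_inv_mul
    (hK : MeasurableSet (integralGL R n F : Set (GL n F)))
    (hr : Irreducible r) (hϖ : algebraMap R F r = ϖ) (i j : n) (x : GL n F) :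
    ∫ y, (cartanCell R ϖ (Pi.single i 1)).indicator (1 : GL n F → ℝ) y *
      (cartanCell R ϖ (1 - Pi.single j 1)).indicator 1 (y⁻¹ * x) ∂μ =
        μ.real (colengthOne R n F ∩ ((diagonalPow ϖ 1)⁻¹ * x) • colengthOne R n F) := by
  have hA := measurableSet_colengthOne hK
  rw [← integral_indicator_one (hA.inter (hA.const_smul _)), cartanCell_single hr hϖ]
  congr 1 with y
  rw [Set.inter_indicator_one, Pi.mul_apply]
  congr 1
  classical
  simp only [Set.indicator_apply, mem_cartanCell_one_sub_single_iff hr hϖ, Pi.one_apply]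

variable [μ.IsMulLeftInvariant]

theorem measureReal_colengthOne
    (hK : MeasurableSet (integralGL R n F : Set (GL n F)))
    (hμ : μ (integralGL R n F) = 1) :
    μ.real (colengthOne R n F) =
      ∑ m ∈ Finset.range (Fintype.card n), (Nat.card (ResidueField R) : ℝ) ^ m := by
  obtain ⟨y, hy, hdisj⟩ := exists_colengthOne_eq_iUnion_smul (R := R) (n := n) (F := F)
  have := Fintype.ofFinite (ℙ (ResidueField R) (n → ResidueField R))
  have hcoset (l) : μ (y l • (integralGL R n F : Set (GL n F))) = 1 := by rw [measure_smul, hμ]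
  have hcard := Projectivization.card_of_finrank (ResidueField R) (n → ResidueField R)
    (Module.finrank_fintype_fun_eq_card _)
  rw [hy, measureReal_iUnion_fintype hdisj (fun l => hK.const_smul _) (by simp [hcoset])]
  simp only [measureReal_def, hcoset, ENNReal.toReal_one, Finset.sum_const, nsmul_one,
    Finset.card_univ]
  rw [← Nat.card_eq_fintype_card, hcard, Nat.cast_sum]
  simp only [Nat.cast_pow]

theorem measureReal_inter_smul
    (hK : MeasurableSet (integralGL R n F : Set (GL n F)))
    (hμ : μ (integralGL R n F) = 1) (hr : Irreducible r) (hϖ : algebraMap R F r = ϖ) (hij : i ≠ j)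
    (g : GL n F) :
    μ.real (colengthOne R n F ∩ g • colengthOne R n F) =
      (cartanCell R ϖ (Pi.single i 1 - Pi.single j 1)).indicator 1 g +
        (∑ m ∈ Finset.range (Fintype.card n), (Nat.card (ResidueField R) : ℝ) ^ m) *
          (cartanCell R ϖ 0).indicator 1 g := by
  by_cases hg : g ∈ integralGL R n F
  · rw [smul_colengthOne hg, Set.inter_self, measureReal_colengthOne hK hμ,
      Set.indicator_of_notMem fun h => notMem_integralGL_of_mem_cartanCell hr hϖ hij h hg,
      Set.indicator_of_mem (mem_cartanCell_zero_iff.2 hg)]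
    simp
  · rw [measureReal_inter_smul_of_notMem hμ hr hϖ hij hg,
      Set.indicator_of_notMem (mt mem_cartanCell_zero_iff.1 hg), mul_zero, add_zero]

theorem statement0_general
    (hK : MeasurableSet (integralGL R n F : Set (GL n F)))
    (hμ : μ (integralGL R n F) = 1) (hr : Irreducible r) (hϖ : algebraMap R F r = ϖ) (hij : i ≠ j)
    (x : GL n F) :
    ∫ y, (cartanCell R ϖ (Pi.single i 1)).indicator (1 : GL n F → ℝ) y *
        (cartanCell R ϖ (1 - Pi.single j 1)).indicator 1 (y⁻¹ * x) ∂μ =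
      (cartanCell R ϖ (1 + Pi.single i 1 - Pi.single j 1)).indicator 1 x +
        (∑ m ∈ Finset.range (Fintype.card n), (Nat.card (ResidueField R) : ℝ) ^ m) *
          (cartanCell R ϖ 1).indicator 1 x := by
  have hshift (a : n → ℤ) : (cartanCell R ϖ a).indicator (1 : GL n F → ℝ)
      ((diagonalPow ϖ 1)⁻¹ * x) = (cartanCell R ϖ (a + 1)).indicator 1 x := by
    classical
    simp only [Set.indicator_apply, mem_cartanCell_add_one_iff, Pi.one_apply]
  rw [integral_cartanCell_mul_cartanCell_inv_mul hK hr hϖ,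
    measureReal_inter_smul hK hμ hr hϖ hij, hshift, hshift, zero_add, add_sub_assoc, add_comm 1]

end Convolution

section Padic

instance : BorelSpace (GL (Fin 3) ℚ_[p]) :=
  ⟨rfl⟩

instance : Finite (ResidueField ℤ_[p]) :=
  .of_equiv (ZMod p) PadicInt.residueField.symm.toEquiv

theorem natCard_residueField_padicInt : Nat.card (ResidueField ℤ_[p]) = p := by
  rw [Nat.card_congr PadicInt.residueField.toEquiv, Nat.card_zmod]

theorem measurableSet_padicK : MeasurableSet (padicK p) :=
  have hcont : Continuous (algebraMap ℤ_[p] ℚ_[p]) := continuous_subtype_val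
  (isCompact_integralGL hcont).measurableSet

/-- The prime `p` as a unit of `ℚ_[p]`. -/
def padicUniformizer : ℚ_[p]ˣ :=
  .mk0 p (NeZero.ne _)

theorem diagonalPow_padicUniformizer (a : Fin 3 → ℤ) :
    diagonalPow (padicUniformizer p) a = padicDiag p (a 0) (a 1) (a 2) := by
  ext1
  rw [coe_diagonalPow]
  exact congrArg diagonal (funext fun i => by fin_cases i <;> rfl)

theorem indicator_cartanCell_padicUniformizer (a : Fin 3 → ℤ) :
    (cartanCell ℤ_[p] (padicUniformizer p) a).indicator 1 =
      padicPhi p (a 0) (a 1) (a 2) := by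
  have hcell : cartanCell ℤ_[p] (padicUniformizer p) a =
      padicDoubleCoset p (a 0) (a 1) (a 2) := by
    ext x
    rw [mem_cartanCell_iff, diagonalPow_padicUniformizer]
    rfl
  rw [hcell]
  rfl

end Padic

/-- `Φ_p(1,0,0) * Φ_p(1,1,0) = Φ_p(2,1,0) + (p² + p + 1) Φ_p(1,1,1)`. -/
theorem statement0 (μ : Measure (GL (Fin 3) ℚ_[p])) [μ.IsHaarMeasure]
    (hμ : μ (padicK p) = 1) :
    ∀ x, padicConv p μ (padicPhi p 1 0 0) (padicPhi p 1 1 0) x =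
      padicPhi p 2 1 0 x + ((p : ℝ) ^ 2 + p + 1) * padicPhi p 1 1 1 x := by
  intro x
  have h := statement0_general (i := (0 : Fin 3)) (j := 2) (measurableSet_padicK p) hμ
    PadicInt.irreducible_p (ϖ := padicUniformizer p) rfl (by decide) x
  simpa [padicConv, indicator_cartanCell_padicUniformizer, natCard_residueField_padicInt,
    Finset.sum_range_succ, add_comm, add_left_comm, add_assoc] using h

end
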